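/- arXiv:2112.07715 — 3 statements merged into one kernel-verified Lean document; each statement's English description precedes it below -/
import Mathlib

section
/- Let C be an integral ℤ-lattice and f ∈ O(C) an isometry of prime order p with characteristic polynomial Φ₁^{e₁}Φ_p^{e_p}. Set A = ker Φ₁(f), B = ker Φ_p(f), and m = min{e₁, e_p, ℓ(D_A), ℓ(D_B)} where ℓ(D) denotes the minimal number of generators of the discriminant group D = N^∨/N. Then pC ⊆ A ⊥ B and the index [C : A ⊥ B] divides p^m. -/
open Polynomial

attribute [instance 2000] Submodule.module

/-- The minimal number of generators `ℓ(D)` of a `ℤ`-module `D`. -/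
noncomputable def minGenerators (D : Type*) [AddCommGroup D] [Module ℤ D] : ℕ :=
  sInf {n : ℕ | ∃ s : Finset D, s.card = n ∧ Submodule.span ℤ (s : Set D) = ⊤}

/-- The discriminant group `D_A = A^∨/A` of a sublattice `A` of an integral lattice
`(C, b)`: since the restricted form is nondegenerate, it is the cokernel of the natural map
`A → Hom(A, ℤ)` induced by `b`. -/
abbrev discGroup {C : Type*} [AddCommGroup C] [Module ℤ C]
    (b : C →ₗ[ℤ] C →ₗ[ℤ] ℤ) (A : Submodule ℤ C) : Type _ :=
  (↥A →ₗ[ℤ] ℤ) ⧸ LinearMap.range (b.domRestrict₁₂ A A)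

/-!
Since `f ^ p = 1`, the endomorphism `Φ = 1 + f + ⋯ + f ^ (p - 1) = Φ_p(f)` satisfies
`(f - 1) Φ = Φ (f - 1) = 0`, and it is multiplication by `p` on `A = ker (f - 1)`. Hence
`p x = Φ x + (p x - Φ x)` lies in `A + B`, where `B = ker Φ`, and the glue group `C / (A + B)` is
killed by `p`. A finite abelian group killed by `p` has order dividing `p ^ k` as soon as it is a
quotient of `ℤ ^ k` or embeds in a group with `k` generators. Now
* `C / (A + B)` is a quotient of `C / B ≅ range Φ ⊆ A`, and `A` has rank `e₁`;
* `C / (A + B)` is a quotient of the cokernel of `1 - f` on `C / A`, whose order is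
  `|Φ_p(1) ^ e_p| = p ^ e_p`, because `f` acts on `C / A` with characteristic polynomial
  `Φ_p ^ e_p`;
* `Φ` is self-adjoint, so `A` and `B` are each other's orthogonal complements and `C / (A + B)`
  embeds in both discriminant groups.
-/

section Cardinality

/- `H` only gets additive maps: it will be a quotient of a lattice, which carries two `ℤ`-module
structures that are not definitionally equal. -/
variable {M D H : Type*} [AddCommGroup M] [iM : Module ℤ M] [AddCommGroup D] [Module ℤ D]
  [AddCommGroup H] {n : ℕ}

theorem card_dvd_natAbs_det [Module.Free ℤ M] [Module.Finite ℤ M] (h : Module.End ℤ M)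
    {g : M →+ H} (hg : Function.Surjective g) (hgh : ∀ x, g (h x) = 0) :
    Nat.card H ∣ (LinearMap.det h).natAbs := by
  -- `Submodule.natAbs_det_equiv` is about the canonical `ℤ`-module structure of `M`.
  obtain rfl : iM = AddCommGroup.toIntModule M := Subsingleton.elim _ _
  by_cases hdet : LinearMap.det h = 0
  · simp [hdet]
  have hinj : Function.Injective h := by
    rw [← LinearMap.ker_eq_bot]
    exact not_not.1 (mt LinearMap.det_eq_zero_iff_ker_ne_bot.2 hdet)
  have hcard : (LinearMap.det h).natAbs = Nat.card (M ⧸ LinearMap.range h) :=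
    Submodule.natAbs_det_equiv (LinearMap.range h) (LinearEquiv.ofInjective h hinj)
  let q : M ⧸ LinearMap.range h →+ H :=
    QuotientAddGroup.lift (LinearMap.range h).toAddSubgroup g (by rintro _ ⟨x, rfl⟩; exact hgh x)
  have hq : Function.Surjective q := QuotientAddGroup.lift_surjective_of_surjective _ g hg _
  exact hcard ▸ AddSubgroup.card_dvd_of_surjective q hq

theorem linearMap_det_natCast {R V : Type*} [CommRing R] [AddCommGroup V] [Module R V]
    [Module.Free R V] (n : ℕ) :
    LinearMap.det (n : Module.End R V) = (n : R) ^ Module.finrank R V := by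
  rw [← nsmul_one, ← Nat.cast_smul_eq_nsmul R, LinearMap.det_smul, map_one, mul_one]

theorem card_dvd_pow_finrank [Module.Free ℤ M] [Module.Finite ℤ M] {g : M →+ H}
    (hg : Function.Surjective g) (hn : ∀ x : H, n • x = 0) :
    Nat.card H ∣ n ^ Module.finrank ℤ M := by
  have hdet := card_dvd_natAbs_det (n : Module.End ℤ M) hg fun x => by
    rw [Module.End.natCast_apply, map_nsmul, hn]
  rwa [linearMap_det_natCast, Int.natAbs_pow, Int.natAbs_natCast] at hdet

theorem exists_surjective_of_minGenerators (D : Type*) [AddCommGroup D] [Module ℤ D]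
    [Module.Finite ℤ D] :
    ∃ g : (Fin (minGenerators D) → ℤ) →+ D, Function.Surjective g := by
  have hne : {n : ℕ | ∃ s : Finset D, s.card = n ∧ Submodule.span ℤ (s : Set D) = ⊤}.Nonempty :=
    let ⟨s, hs⟩ := Module.Finite.fg_top (R := ℤ) (M := D)
    ⟨_, s, rfl, hs⟩
  obtain ⟨s, hcard, hspan⟩ := Nat.sInf_mem hne
  let e : Fin (minGenerators D) ≃ s := (finCongr hcard.symm).trans s.equivFin.symm
  refine ⟨(Fintype.linearCombination ℤ fun i => (e i : D)).toAddMonoidHom,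
    LinearMap.range_eq_top.1 ?_⟩
  rw [Fintype.range_linearCombination, ← hspan, ← Function.comp_def Subtype.val e,
    e.surjective.range_comp, Subtype.range_coe]

theorem card_dvd_pow_minGenerators [Module.Finite ℤ D] {φ : H →+ D}
    (hφ : Function.Injective φ) (hn : ∀ x : H, n • x = 0) : Nat.card H ∣ n ^ minGenerators D := by
  obtain ⟨g, hg⟩ := exists_surjective_of_minGenerators D
  let K : Submodule ℤ (Fin (minGenerators D) → ℤ) := AddSubgroup.toIntSubmodule (φ.range.comap g)
  let ψ : K →+ φ.range := (g.comp K.subtype.toAddMonoidHom).codRestrict φ.range fun x => x.2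
  have hψ : Function.Surjective ψ := by
    rintro ⟨y, hy⟩
    obtain ⟨x, rfl⟩ := hg y
    exact ⟨⟨x, hy⟩, rfl⟩
  have hK : Module.finrank ℤ K ≤ minGenerators D := by
    simpa using Submodule.finrank_le K
  have e := AddMonoidHom.ofInjective hφ
  calc Nat.card H ∣ n ^ Module.finrank ℤ K :=
        card_dvd_pow_finrank (g := e.symm.toAddMonoidHom.comp ψ) (e.symm.surjective.comp hψ) hn
    _ ∣ n ^ minGenerators D := pow_dvd_pow n hK

end Cardinality

section DiscriminantGroup

variable {C : Type*} [AddCommGroup C] [Module ℤ C] (b : C →ₗ[ℤ] C →ₗ[ℤ] ℤ) (N : Submodule ℤ C)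

/-- The map `C → D_N` sending `x` to the class of the functional `b x` restricted to `N`. -/
def toDiscGroup : C →+ discGroup b N :=
  (LinearMap.range (b.domRestrict₁₂ N N)).mkQ.toAddMonoidHom.comp
    (b.domRestrict₂ N).toAddMonoidHom

variable {b N}

theorem toDiscGroup_eq_zero_iff {x : C} :
    toDiscGroup b N x = 0 ↔ x ∈ N ⊔ N.orthogonalBilin b.flip := by
  calc toDiscGroup b N x = 0 ↔ ∃ y : N, b.domRestrict₁₂ N N y = b.domRestrict₂ N x :=
        Submodule.Quotient.mk_eq_zero _
    _ ↔ ∃ y ∈ N, x - y ∈ N.orthogonalBilin b.flip := by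
        have hortho (y : N) : b.domRestrict₁₂ N N y = b.domRestrict₂ N x ↔
            x - y ∈ N.orthogonalBilin b.flip := by
          rw [eq_comm]
          simp [LinearMap.ext_iff, LinearMap.domRestrict₂_apply, LinearMap.domRestrict₁₂_apply,
            sub_eq_zero]
        simp only [hortho, Subtype.exists, exists_prop]
    _ ↔ x ∈ N ⊔ N.orthogonalBilin b.flip := by
        simp [Submodule.mem_sup, ← eq_sub_iff_add_eq']

theorem nsmul_quotient_eq_zero {K : Submodule ℤ C} {n : ℕ} (hn : ∀ x, n • x ∈ K)
    (x : C ⧸ K) : n • x = 0 := by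
  obtain ⟨x, rfl⟩ := K.mkQ_surjective x
  exact (Submodule.Quotient.mk_eq_zero K).2 (hn x)

theorem card_quotient_sup_dvd_pow_minGenerators [Module.Finite ℤ C] [Module.Free ℤ C]
    {N' : Submodule ℤ C} (hN' : N.orthogonalBilin b.flip = N') {n : ℕ}
    (hn : ∀ x, n • x ∈ N ⊔ N') :
    Nat.card (C ⧸ (N ⊔ N')) ∣ n ^ minGenerators (discGroup b N) := by
  subst hN'
  let φ : C ⧸ (N ⊔ N.orthogonalBilin b.flip) →+ discGroup b N :=
    QuotientAddGroup.lift (N ⊔ N.orthogonalBilin b.flip).toAddSubgroup (toDiscGroup b N)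
      fun _ => toDiscGroup_eq_zero_iff.2
  have hφ : Function.Injective φ := by
    refine (injective_iff_map_eq_zero φ).2 fun x => ?_
    obtain ⟨x, rfl⟩ := Submodule.mkQ_surjective _ x
    exact fun hx => (Submodule.Quotient.mk_eq_zero _).2 (toDiscGroup_eq_zero_iff.1 hx)
  exact card_dvd_pow_minGenerators hφ (nsmul_quotient_eq_zero hn)

end DiscriminantGroup

section CyclicNorm

/-- The norm `1 + x + ⋯ + x ^ (n - 1)`, meant for `x` with `x ^ n = 1`: it is the sum of the
elements of the cyclic group generated by `x`, each counted equally often. For a prime `p` it is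
`Φ_p(x)` when `n = p`. -/
def cyclicNorm {S : Type*} [Semiring S] (x : S) (n : ℕ) : S :=
  ∑ i ∈ Finset.range n, x ^ i

theorem aeval_cyclotomic_prime {R S : Type*} [CommRing R] [Ring S] [Algebra R S] {p : ℕ}
    (hp : p.Prime) (x : S) : aeval x (cyclotomic p R) = cyclicNorm x p := by
  have : Fact p.Prime := ⟨hp⟩
  simp [cyclicNorm, cyclotomic_prime]

theorem sub_one_mul_cyclicNorm {S : Type*} [Ring S] {x : S} {n : ℕ} (hx : x ^ n = 1) :
    (x - 1) * cyclicNorm x n = 0 := by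
  rw [cyclicNorm, mul_geom_sum, hx, sub_self]

theorem cyclicNorm_mul_sub_one {S : Type*} [Ring S] {x : S} {n : ℕ} (hx : x ^ n = 1) :
    cyclicNorm x n * (x - 1) = 0 := by
  rw [cyclicNorm, geom_sum_mul, hx, sub_self]

variable {R M : Type*} [CommRing R] [AddCommGroup M] [Module R M] {f : Module.End R M} {n : ℕ}

theorem pow_apply_of_mem_ker_sub_one {x : M} (hx : x ∈ LinearMap.ker (f - 1)) (i : ℕ) :
    (f ^ i) x = x := by
  have hfx : f x = x := sub_eq_zero.1 hx
  rw [Module.End.pow_apply, Function.iterate_fixed hfx]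

theorem cyclicNorm_apply_of_mem_ker_sub_one {x : M} (hx : x ∈ LinearMap.ker (f - 1)) :
    cyclicNorm f n x = n • x := by
  simp [cyclicNorm, pow_apply_of_mem_ker_sub_one hx]

theorem range_cyclicNorm_le_ker_sub_one (hf : f ^ n = 1) :
    LinearMap.range (cyclicNorm f n) ≤ LinearMap.ker (f - 1) :=
  LinearMap.range_le_ker_iff.2 (sub_one_mul_cyclicNorm hf)

theorem range_sub_one_le_ker_cyclicNorm (hf : f ^ n = 1) :
    LinearMap.range (f - 1) ≤ LinearMap.ker (cyclicNorm f n) :=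
  LinearMap.range_le_ker_iff.2 (cyclicNorm_mul_sub_one hf)

theorem nsmul_mem_ker_sub_one_sup_ker_cyclicNorm (hf : f ^ n = 1) (x : M) :
    n • x ∈ LinearMap.ker (f - 1) ⊔ LinearMap.ker (cyclicNorm f n) := by
  have hfix : cyclicNorm f n x ∈ LinearMap.ker (f - 1) :=
    range_cyclicNorm_le_ker_sub_one hf (LinearMap.mem_range_self _ x)
  have hker : n • x - cyclicNorm f n x ∈ LinearMap.ker (cyclicNorm f n) := by
    rw [LinearMap.mem_ker, map_sub, map_nsmul, cyclicNorm_apply_of_mem_ker_sub_one hfix, sub_self]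
  simpa using Submodule.add_mem_sup hfix hker

theorem disjoint_ker_sub_one_ker_cyclicNorm [IsAddTorsionFree M] (hn : n ≠ 0) :
    Disjoint (LinearMap.ker (f - 1)) (LinearMap.ker (cyclicNorm f n)) := by
  refine Submodule.disjoint_def.2 fun x hx hx' => ?_
  rwa [LinearMap.mem_ker, cyclicNorm_apply_of_mem_ker_sub_one hx, smul_eq_zero_iff_right hn] at hx'

theorem disjoint_ker_sub_one_range_sub_one [IsAddTorsionFree M] (hn : n ≠ 0) (hf : f ^ n = 1) :
    Disjoint (LinearMap.ker (f - 1)) (LinearMap.range (f - 1)) :=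
  (disjoint_ker_sub_one_ker_cyclicNorm hn).mono_right (range_sub_one_le_ker_cyclicNorm hf)

section Orthogonality

variable {b : LinearMap.BilinForm R M}

theorem isOrthogonal_pow (hb : b.IsOrthogonal f) (i : ℕ) : b.IsOrthogonal ⇑(f ^ i) := by
  induction i with
  | zero => exact fun _ _ => rfl
  | succ i ih => exact fun x y => by simp only [pow_succ, Module.End.mul_apply, ih _ _, hb x y]

theorem isAdjointPair_pow (hb : b.IsOrthogonal f) {i j : ℕ} (hij : f ^ (i + j) = 1) :
    LinearMap.IsAdjointPair b b ⇑(f ^ i) ⇑(f ^ j) := fun x y => by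
  rw [← isOrthogonal_pow hb i x, ← Module.End.mul_apply, ← pow_add, hij, Module.End.one_apply]

theorem isAdjointPair_cyclicNorm (hb : b.IsOrthogonal f) (hf : f ^ n = 1) :
    LinearMap.IsAdjointPair b b ⇑(cyclicNorm f n) ⇑(cyclicNorm f n) := fun x y => by
  calc b (cyclicNorm f n x) y = ∑ i ∈ Finset.range n, b ((f ^ i) x) y := by simp [cyclicNorm]
    _ = ∑ i ∈ Finset.range n, b x ((f ^ (n - 1 - i)) (f y)) := by
        refine Finset.sum_congr rfl fun i hi => ?_
        have := Finset.mem_range.1 hi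
        rw [← Module.End.mul_apply, ← pow_succ]
        exact isAdjointPair_pow hb (by rwa [show i + (n - 1 - i + 1) = n by lia]) x y
    _ = b x ((cyclicNorm f n * f) y) := by
        rw [Finset.sum_range_reflect fun i => b x ((f ^ i) (f y))]
        simp [cyclicNorm]
    _ = b x (cyclicNorm f n y) := by
        rw [sub_eq_zero.1 ((mul_sub_one _ f).symm.trans (cyclicNorm_mul_sub_one hf))]

theorem orthogonalBilin_flip_ker_sub_one [IsAddTorsionFree R] (hn : n ≠ 0)
    (hsep : b.SeparatingLeft) (hb : b.IsOrthogonal f) (hf : f ^ n = 1) :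
    (LinearMap.ker (f - 1)).orthogonalBilin b.flip = LinearMap.ker (cyclicNorm f n) := by
  have hadj := isAdjointPair_cyclicNorm hb hf
  ext x
  constructor
  · refine fun hx => hsep _ fun y => ?_
    rw [hadj x y]
    exact hx _ (range_cyclicNorm_le_ker_sub_one hf (LinearMap.mem_range_self _ y))
  · intro hx y hy
    have : n • b x y = 0 := by
      rw [← map_nsmul, ← cyclicNorm_apply_of_mem_ker_sub_one hy, ← hadj x y, LinearMap.mem_ker.1 hx,
        map_zero, LinearMap.zero_apply]
    exact (smul_eq_zero_iff_right hn).1 this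

theorem orthogonalBilin_flip_ker_cyclicNorm [IsAddTorsionFree R] (hn : n ≠ 0)
    (hsep : b.SeparatingLeft) (hb : b.IsOrthogonal f) (hf : f ^ n = 1) :
    (LinearMap.ker (cyclicNorm f n)).orthogonalBilin b.flip = LinearMap.ker (f - 1) := by
  ext x
  constructor
  · refine fun hx => hsep _ fun y => ?_
    obtain ⟨z, rfl⟩ : ∃ z, f z = y := ⟨(f ^ (n - 1)) y, by
      rw [← Module.End.mul_apply, mul_pow_sub_one hn, hf, Module.End.one_apply]⟩
    have hxz : b x (f z - z) = 0 :=
      hx _ (range_sub_one_le_ker_cyclicNorm hf (LinearMap.mem_range_self _ z))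
    rw [map_sub] at hxz
    rw [LinearMap.sub_apply, Module.End.one_apply, LinearMap.map_sub₂, hb x z, ← neg_sub, hxz,
      neg_zero]
  · intro hx y hy
    have : n • b x y = 0 := by
      rw [← LinearMap.smul_apply, ← map_nsmul, ← cyclicNorm_apply_of_mem_ker_sub_one hx,
        isAdjointPair_cyclicNorm hb hf x y, LinearMap.mem_ker.1 hy, map_zero]
    exact (smul_eq_zero_iff_right hn).1 this

end Orthogonality

end CyclicNorm

section QuotientFixed

variable {R V : Type*} [CommRing R] [AddCommGroup V] [Module R V] (f : Module.End R V)

theorem ker_sub_one_le_comap : LinearMap.ker (f - 1) ≤ (LinearMap.ker (f - 1)).comap f :=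
  fun x hx => by
    have hfx : f x = x := sub_eq_zero.1 hx
    rwa [Submodule.mem_comap, hfx]

/-- The endomorphism of `V / ker (f - 1)` induced by `f`. -/
def mapQKerSubOne : Module.End R (V ⧸ LinearMap.ker (f - 1)) :=
  (LinearMap.ker (f - 1)).mapQ (LinearMap.ker (f - 1)) f (ker_sub_one_le_comap f)

theorem one_sub_mapQKerSubOne_mk (x : V) :
    (1 - mapQKerSubOne f) (Submodule.Quotient.mk x) = Submodule.Quotient.mk (-(f - 1) x) := by
  simp [mapQKerSubOne]

end QuotientFixed

section Charpoly

variable {R V : Type*} [CommRing R] [IsDomain R] [AddCommGroup V] [Module R V]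
  [Module.Free R V] [Module.Finite R V]

theorem pow_mul_cancel_of_not_isRoot {a : R} {P Q : R[X]} {k l : ℕ} (hP : ¬ P.IsRoot a)
    (hQ : ¬ Q.IsRoot a) (h : (X - C a) ^ k * P = (X - C a) ^ l * Q) : k = l ∧ P = Q := by
  have hX (m : ℕ) : (X - C a) ^ m ≠ 0 := pow_ne_zero m (X_sub_C_ne_zero a)
  have hmult {S : R[X]} (hS : ¬ S.IsRoot a) (m : ℕ) :
      rootMultiplicity a ((X - C a) ^ m * S) = m := by
    have hS0 : S ≠ 0 := by rintro rfl; exact hS (by simp)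
    rw [rootMultiplicity_mul (mul_ne_zero (hX m) hS0), rootMultiplicity_X_sub_C_pow,
      rootMultiplicity_eq_zero hS, add_zero]
  obtain rfl : k = l := by rw [← hmult hP k, h, hmult hQ l]
  exact ⟨rfl, mul_left_cancel₀ (hX k) h⟩

theorem charpoly_eq_charpoly_restrict_mul_charpoly_mapQ [Infinite R] (f : Module.End R V)
    (W : Submodule R V) [Module.Free R W] [Module.Finite R W] [Module.Free R (V ⧸ W)]
    (hW : W ≤ W.comap f) :
    f.charpoly = (f.restrict hW).charpoly * (W.mapQ W f hW).charpoly := by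
  refine Polynomial.funext fun t => ?_
  have hWt : W ≤ W.comap (algebraMap R (Module.End R V) t - f) := fun x hx =>
    W.sub_mem (W.smul_mem t hx) (hW hx)
  rw [eval_mul, LinearMap.eval_charpoly, LinearMap.eval_charpoly, LinearMap.eval_charpoly,
    LinearMap.det_eq_det_mul_det W _ hWt]
  congr 2
  ext x
  simp

variable [IsPrincipalIdealRing R] (f : Module.End R V)

instance free_quotient_ker : Module.Free R (V ⧸ LinearMap.ker f) :=
  Module.Free.of_equiv f.quotKerEquivRange.symm

theorem charpoly_eq_X_sub_one_pow_mul_charpoly_mapQKerSubOne [Infinite R] :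
    f.charpoly = (X - C 1) ^ Module.finrank R (LinearMap.ker (f - 1)) *
      (mapQKerSubOne f).charpoly := by
  have hrestrict : LinearMap.restrict (p := LinearMap.ker (f - 1)) (q := LinearMap.ker (f - 1)) f
      (ker_sub_one_le_comap f) = 1 :=
    LinearMap.ext fun x => Subtype.ext (sub_eq_zero.1 x.2)
  rw [charpoly_eq_charpoly_restrict_mul_charpoly_mapQ f _ (ker_sub_one_le_comap f), hrestrict,
    LinearMap.charpoly_one, C_1, mapQKerSubOne]

variable {f}

theorem not_isRoot_charpoly_mapQKerSubOne
    (hdisj : Disjoint (LinearMap.ker (f - 1)) (LinearMap.range (f - 1))) :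
    ¬ (mapQKerSubOne f).charpoly.IsRoot 1 := by
  rw [IsRoot, LinearMap.eval_charpoly, map_one, LinearMap.det_eq_zero_iff_ker_ne_bot, not_not,
    LinearMap.ker_eq_bot']
  intro y hy
  obtain ⟨x, rfl⟩ := Submodule.Quotient.mk_surjective _ y
  rw [one_sub_mapQKerSubOne_mk, Submodule.Quotient.mk_eq_zero, Submodule.neg_mem_iff] at hy
  exact (Submodule.Quotient.mk_eq_zero _).2
    (Submodule.disjoint_def.1 hdisj _ hy (LinearMap.mem_range_self _ x))

theorem finrank_ker_sub_one_and_charpoly_mapQKerSubOne_of_charpoly_eq [Infinite R]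
    (hdisj : Disjoint (LinearMap.ker (f - 1)) (LinearMap.range (f - 1))) {e : ℕ} {Q : R[X]}
    (hQ : ¬ Q.IsRoot 1) (hf : f.charpoly = (X - C 1) ^ e * Q) :
    Module.finrank R (LinearMap.ker (f - 1)) = e ∧ (mapQKerSubOne f).charpoly = Q :=
  pow_mul_cancel_of_not_isRoot (not_isRoot_charpoly_mapQKerSubOne hdisj) hQ
    (charpoly_eq_X_sub_one_pow_mul_charpoly_mapQKerSubOne f ▸ hf)

end Charpoly

section GlueIndex

-- `L ⧸ K` must not get the `ℤ`-module structure of a mere additive group: it agrees with the one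
-- inherited from `L` only propositionally.
attribute [local instance 2000] Submodule.Quotient.module

variable {L : Type*} [AddCommGroup L] [Module ℤ L] [Module.Free ℤ L] [Module.Finite ℤ L]
  {f : Module.End ℤ L} {n : ℕ}

theorem card_quotient_dvd_pow_finrank_ker_sub_one (hf : f ^ n = 1) :
    Nat.card (L ⧸ (LinearMap.ker (f - 1) ⊔ LinearMap.ker (cyclicNorm f n))) ∣
      n ^ Module.finrank ℤ (LinearMap.ker (f - 1)) := by
  have hrank : Module.finrank ℤ (L ⧸ LinearMap.ker (cyclicNorm f n)) ≤
      Module.finrank ℤ (LinearMap.ker (f - 1)) := by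
    rw [(cyclicNorm f n).quotKerEquivRange.finrank_eq]
    exact Submodule.finrank_mono (range_cyclicNorm_le_ker_sub_one hf)
  refine (card_dvd_pow_finrank (g := (Submodule.factor le_sup_right).toAddMonoidHom)
    (Submodule.factor_surjective le_sup_right)
    (nsmul_quotient_eq_zero (nsmul_mem_ker_sub_one_sup_ker_cyclicNorm hf))).trans
    (pow_dvd_pow n hrank)

theorem card_quotient_dvd_natAbs_eval_charpoly_mapQKerSubOne {K : Submodule ℤ L}
    (hker : LinearMap.ker (f - 1) ≤ K) (hrange : LinearMap.range (f - 1) ≤ K) :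
    Nat.card (L ⧸ K) ∣ ((mapQKerSubOne f).charpoly.eval 1).natAbs := by
  rw [LinearMap.eval_charpoly, map_one]
  refine card_dvd_natAbs_det _ (g := (Submodule.factor hker).toAddMonoidHom)
    (Submodule.factor_surjective hker) fun y => ?_
  obtain ⟨x, rfl⟩ := Submodule.Quotient.mk_surjective _ y
  rw [one_sub_mapQKerSubOne_mk]
  exact (Submodule.Quotient.mk_eq_zero K).2 (K.neg_mem (hrange (LinearMap.mem_range_self _ x)))

theorem card_quotient_dvd_of_charpoly_eq (hn : n ≠ 0) (hf : f ^ n = 1) {e : ℕ} {Q : ℤ[X]}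
    (hQ : ¬ Q.IsRoot 1) (hchar : f.charpoly = (X - C 1) ^ e * Q) :
    Nat.card (L ⧸ (LinearMap.ker (f - 1) ⊔ LinearMap.ker (cyclicNorm f n))) ∣ n ^ e ∧
      Nat.card (L ⧸ (LinearMap.ker (f - 1) ⊔ LinearMap.ker (cyclicNorm f n))) ∣
        (Q.eval 1).natAbs := by
  have : IsAddTorsionFree L := .of_isTorsionFree ℤ L
  obtain ⟨rfl, rfl⟩ := finrank_ker_sub_one_and_charpoly_mapQKerSubOne_of_charpoly_eq
    (disjoint_ker_sub_one_range_sub_one hn hf) hQ hchar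
  exact ⟨card_quotient_dvd_pow_finrank_ker_sub_one hf,
    card_quotient_dvd_natAbs_eval_charpoly_mapQKerSubOne le_sup_left
      ((range_sub_one_le_ker_cyclicNorm hf).trans le_sup_right)⟩

end GlueIndex

theorem dvd_pow_min {α : Type*} [Monoid α] {a d : α} {k l : ℕ} (hk : d ∣ a ^ k)
    (hl : d ∣ a ^ l) : d ∣ a ^ min k l := by
  rcases min_choice k l with h | h <;> rwa [h]

theorem glue_index_divides_general
    {p : ℕ} (hp : p.Prime)
    {C : Type*} [AddCommGroup C] [Module ℤ C] [Module.Free ℤ C] [Module.Finite ℤ C]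
    {b : C →ₗ[ℤ] C →ₗ[ℤ] ℤ} (hsep : b.SeparatingLeft)
    {f : Module.End ℤ C} (hb : LinearMap.IsOrthogonal b f) (hf : f ^ p = 1)
    {e₁ eₚ : ℕ}
    (hchar : LinearMap.charpoly f = cyclotomic 1 ℤ ^ e₁ * cyclotomic p ℤ ^ eₚ)
    {A B : Submodule ℤ C}
    (hA : A = LinearMap.ker (aeval f (cyclotomic 1 ℤ)))
    (hB : B = LinearMap.ker (aeval f (cyclotomic p ℤ))) :
    (∀ x : C, (p : ℤ) • x ∈ A ⊔ B) ∧
      Nat.card (C ⧸ (A ⊔ B)) ∣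
        p ^ min (min e₁ eₚ)
            (min (minGenerators (discGroup b A)) (minGenerators (discGroup b B))) := by
  have : Fact p.Prime := ⟨hp⟩
  have hroot : ¬ (cyclotomic p ℤ ^ eₚ).IsRoot 1 := by simp [hp.ne_zero]
  obtain rfl : A = LinearMap.ker (f - 1) := by simpa [cyclotomic_one] using hA
  obtain rfl : B = LinearMap.ker (cyclicNorm f p) := by rwa [aeval_cyclotomic_prime hp] at hB
  have hpC := nsmul_mem_ker_sub_one_sup_ker_cyclicNorm hf
  obtain ⟨h₁, hₚ⟩ := card_quotient_dvd_of_charpoly_eq hp.ne_zero hf hroot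
    (by simpa [cyclotomic_one] using hchar)
  have hDA := card_quotient_sup_dvd_pow_minGenerators
    (orthogonalBilin_flip_ker_sub_one hp.ne_zero hsep hb hf) hpC
  have hDB := card_quotient_sup_dvd_pow_minGenerators
    (orthogonalBilin_flip_ker_cyclicNorm hp.ne_zero hsep hb hf) (by rwa [sup_comm])
  rw [sup_comm] at hDB
  refine ⟨fun x => by simpa using hpC x,
    dvd_pow_min (dvd_pow_min h₁ ?_) (dvd_pow_min hDA hDB)⟩
  simpa [Int.natAbs_pow] using hₚ

/-- Let `C` be an integral `ℤ`-lattice and `f ∈ O(C)` an isometry of prime order `p` with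
characteristic polynomial `Φ₁^{e₁} Φ_p^{e_p}`.  With `A = ker Φ₁(f)`, `B = ker Φ_p(f)` and
`m = min{e₁, e_p, ℓ(D_A), ℓ(D_B)}`, one has `pC ⊆ A ⊥ B` and `[C : A ⊥ B] ∣ p^m`. -/
theorem glue_index_divides
    (p : ℕ) (hp : p.Prime)
    (C : Type*) [AddCommGroup C] [Module ℤ C] [Module.Free ℤ C] [Module.Finite ℤ C]
    (b : C →ₗ[ℤ] C →ₗ[ℤ] ℤ)
    (hsymm : ∀ x y, b x y = b y x)
    (hnondeg : ∀ x, (∀ y, b x y = 0) → x = 0)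
    (f : Module.End ℤ C)
    (hisom : ∀ x y, b (f x) (f y) = b x y)
    (hord : orderOf f = p)
    (e₁ eₚ : ℕ)
    (hchar : LinearMap.charpoly f = cyclotomic 1 ℤ ^ e₁ * cyclotomic p ℤ ^ eₚ)
    (A B : Submodule ℤ C)
    (hA : A = LinearMap.ker (aeval f (cyclotomic 1 ℤ)))
    (hB : B = LinearMap.ker (aeval f (cyclotomic p ℤ))) :
    (∀ x : C, (p : ℤ) • x ∈ A ⊔ B) ∧
      Nat.card (C ⧸ (A ⊔ B)) ∣
        p ^ min (min e₁ eₚ)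
            (min (minGenerators (discGroup b A)) (minGenerators (discGroup b B))) := by
  exact glue_index_divides_general hp hnondeg hisom (hord ▸ pow_orderOf_eq_one f) hchar hA hB
end

section
/- Let K be a non-archimedean local field of characteristic 0 that is dyadic (residue characteristic 2), E/K a ramified quadratic field extension with maximal orders 𝔬 ⊆ K and 𝒪 ⊆ E, and let B ⊆ 𝔬 be an additive subgroup (ℤ-submodule) such that Tr^E_K(𝒪) ⊆ B, 1 ∈ B, and Nr^E_K(𝒪)·B ⊆ B. Then 𝔬 ⊆ B. -/
/-!
Since `E/K` is totally ramified, the norm `ϖ` of a uniformizer of `E` is a uniformizer of `K`.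
Squaring is onto on the residue field of `K`, so every `x ∈ 𝔬` is `a ^ 2 + ϖ * y`, where
`a ^ 2 = Nr(a) * 1 ∈ B`. As `ϖ * B ⊆ B`, the argument can be repeated for `y`, which gives
`𝔬 = B + ϖ ^ j * 𝔬` for every `j`. For large `j`, `ϖ ^ j * 𝔬 ⊆ 2 * 𝔬 = Tr(𝔬) ⊆ B`.

The same argument works over every discrete valuation ring of characteristic `0`, in degree `d`,
as soon as every element of the residue field is a `d`-th power. That `𝔬` is such a ring comes from
the spectral norm: it is multiplicative because `ℚ₂` is complete, and `𝔬` is its unit ball, so `𝔬`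
contains `x` or `x⁻¹` for every `x ∈ K`.
-/

open Function IsLocalRing

lemma exists_sub_pow_mul_mem {A : Type*} [CommRing A] {B : AddSubgroup A} {ϖ : A}
    (hmul : ∀ b ∈ B, ϖ * b ∈ B) (hmod : ∀ x, ∃ b ∈ B, ϖ ∣ x - b) (j : ℕ) (x : A) :
    ∃ z, x - ϖ ^ j * z ∈ B := by
  induction j generalizing x with
  | zero => exact ⟨x, by simp⟩
  | succ j ih =>
    obtain ⟨b, hb, y, hy⟩ := hmod x
    obtain ⟨z, hz⟩ := ih y
    have hx : x - ϖ ^ (j + 1) * z = b + ϖ * (y - ϖ ^ j * z) := by linear_combination hy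
    exact ⟨z, hx ▸ B.add_mem hb (hmul _ hz)⟩

section Norm

variable {A S : Type*} [CommRing A] [CommRing S] [Algebra A S]

lemma inertiaDeg_eq_one_of_surjective [Algebra.IsIntegral A S] (P : Ideal S) [P.IsMaximal]
    (hP : Surjective (algebraMap A (S ⧸ P))) : P.inertiaDeg A = 1 := by
  let : Field (A ⧸ P.under A) := Ideal.Quotient.field _
  have : Nontrivial (S ⧸ P) := Ideal.Quotient.nontrivial_iff.2 (Ideal.IsMaximal.ne_top ‹_›)
  rw [Ideal.inertiaDeg_eq_of_isMaximal (P.under A) P]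
  refine finrank_eq_one (1 : S ⧸ P) one_ne_zero fun y => ?_
  obtain ⟨a, rfl⟩ := hP y
  exact ⟨Ideal.Quotient.mk _ a, by rw [Algebra.smul_def, mul_one]; rfl⟩

variable (A) in
lemma isPrincipalIdealRing_of_finite_of_isLocalRing [IsLocalRing A] [IsDedekindDomain S]
    [Module.Finite A S] : IsPrincipalIdealRing S := by
  refine .of_finite_maximals ((Algebra.QuasiFinite.finite_primesOver (maximalIdeal A)).subset ?_)
  intro P (hP : P.IsMaximal)
  exact ⟨hP.isPrime, ⟨(eq_maximalIdeal inferInstance).symm⟩⟩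

lemma exists_irreducible_norm [IsDomain A] [IsDiscreteValuationRing A]
    [PerfectField (FractionRing A)] [IsDedekindDomain S] [Module.Finite A S]
    [Module.IsTorsionFree A S] (P : Ideal S) [P.IsMaximal]
    (hP : Surjective (algebraMap A (S ⧸ P))) : ∃ w : S, Irreducible (Algebra.norm A w) := by
  have : IsPrincipalIdealRing S := isPrincipalIdealRing_of_finite_of_isLocalRing A
  obtain ⟨w, hw : P = Ideal.span {w}⟩ := (IsPrincipalIdealRing.principal P).principal
  have hrel : Ideal.relNorm A P = P.under A := by
    rw [Ideal.relNorm_eq_pow_of_isMaximal P (P.under A), inertiaDeg_eq_one_of_surjective P hP,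
      pow_one]
  refine ⟨w, (IsDiscreteValuationRing.irreducible_iff_uniformizer _).2 ?_⟩
  rw [← Algebra.intNorm_eq_norm, ← Ideal.relNorm_singleton, ← hw, hrel]
  exact (eq_maximalIdeal inferInstance).symm

theorem eq_top_of_trace_mem_of_norm_mul_mem [IsDomain A] [IsDiscreteValuationRing A] [CharZero A]
    [IsDedekindDomain S] [Module.Finite A S] [Module.IsTorsionFree A S]
    (P : Ideal S) [P.IsMaximal] (hP : Surjective (algebraMap A (S ⧸ P)))
    (hpow : Surjective fun a : ResidueField A => a ^ Module.finrank A S)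
    (B : AddSubgroup A) (htrace : ∀ x : S, Algebra.trace A S x ∈ B) (hone : 1 ∈ B)
    (hnorm : ∀ x : S, ∀ b ∈ B, Algebra.norm A x * b ∈ B) : B = ⊤ := by
  set d := Module.finrank A S with hd
  obtain ⟨w, hw⟩ := exists_irreducible_norm P hP
  set ϖ := Algebra.norm A w
  have hpow_mem (a : A) : a ^ d ∈ B := by
    simpa [Algebra.norm_algebraMap_of_basis (Module.Free.chooseBasis A S), hd,
      Module.finrank_eq_card_chooseBasisIndex] using hnorm (algebraMap A S a) 1 hone
  have hmod (x : A) : ∃ b ∈ B, ϖ ∣ x - b := by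
    obtain ⟨y, hy⟩ := hpow (residue A x)
    obtain ⟨a, rfl⟩ := residue_surjective y
    refine ⟨a ^ d, hpow_mem a, ?_⟩
    rw [← Ideal.mem_span_singleton, ← hw.maximalIdeal_eq, ← residue_eq_zero_iff, map_sub, map_pow,
      sub_eq_zero]
    exact hy.symm
  have hd_mul_mem (a : A) : (d : A) * a ∈ B := by
    simpa [Algebra.trace_algebraMap_of_basis (Module.Free.chooseBasis A S), hd,
      Module.finrank_eq_card_chooseBasisIndex] using htrace (algebraMap A S a)
  have hd_ne : (d : A) ≠ 0 := Nat.cast_ne_zero.2 Module.finrank_pos.ne'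
  obtain ⟨j, u, hu⟩ := IsDiscreteValuationRing.associated_pow_irreducible hd_ne hw
  refine (AddSubgroup.eq_top_iff' B).2 fun x => ?_
  obtain ⟨z, hz⟩ := exists_sub_pow_mul_mem (hnorm w) hmod j x
  have hx : x = (x - ϖ ^ j * z) + d * (u * z) := by linear_combination -z * hu
  exact hx ▸ B.add_mem hz (hd_mul_mem _)

end Norm

section SpectralNorm

variable {R F L : Type*} [CommRing R] [NontriviallyNormedField F] [Field L]
  [Algebra R F] [IsFractionRing R F] [Algebra F L] [Algebra R L] [IsScalarTower R F L]

lemma isIntegral_iff_spectralNorm_le_one [IsDomain R] [IsIntegrallyClosed R]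
    [Algebra.IsAlgebraic F L] (hR : ∀ x : F, ‖x‖ ≤ 1 ↔ x ∈ Set.range (algebraMap R F)) (x : L) :
    IsIntegral R x ↔ spectralNorm F L x ≤ 1 := by
  have hx : IsIntegral F x := Algebra.IsIntegral.isIntegral x
  have hmonic := minpoly.monic hx
  rw [spectralNorm, spectralValue_le_one_iff hmonic]
  simp only [hR, ← Polynomial.lifts_iff_coeff_lifts]
  constructor
  · intro h
    rw [minpoly.isIntegrallyClosed_eq_field_fractions' F h]
    exact ⟨_, rfl⟩
  · intro h
    obtain ⟨q, hq, -, hq_monic⟩ := Polynomial.lifts_and_degree_eq_and_monic h hmonic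
    refine ⟨q, hq_monic, ?_⟩
    rw [← Polynomial.aeval_def, ← Polynomial.aeval_map_algebraMap F, hq, minpoly.aeval]

variable [IsUltrametricDist F] [CompleteSpace F]

lemma isIntegral_or_isIntegral_inv [IsDomain R] [IsIntegrallyClosed R]
    [Algebra.IsAlgebraic F L] (hR : ∀ x : F, ‖x‖ ≤ 1 ↔ x ∈ Set.range (algebraMap R F)) (x : L) :
    IsIntegral R x ∨ IsIntegral R x⁻¹ := by
  simp only [isIntegral_iff_spectralNorm_le_one hR, ← spectralMulAlgNorm_def, map_inv₀]
  exact (le_total _ _).imp_right inv_le_one_of_one_le₀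

theorem isDiscreteValuationRing_integralClosure [IsDomain R] [IsDiscreteValuationRing R]
    [FiniteDimensional F L] [Algebra.IsSeparable F L]
    (hR : ∀ x : F, ‖x‖ ≤ 1 ↔ x ∈ Set.range (algebraMap R F)) :
    IsDiscreteValuationRing (integralClosure R L) := by
  have : IsFractionRing (integralClosure R L) L :=
    integralClosure.isFractionRing_of_finite_extension F L
  have : ValuationRing (integralClosure R L) :=
    (ValuationRing.iff_isInteger_or_isInteger _ L).2 fun x =>
      (isIntegral_or_isIntegral_inv hR x).imp (fun h => ⟨⟨x, h⟩, rfl⟩) fun h => ⟨⟨x⁻¹, h⟩, rfl⟩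
  have : IsNoetherianRing (integralClosure R L) := IsIntegralClosure.isNoetherianRing R F L _
  have : Module.IsTorsionFree R L := .trans_faithfulSMul R F L
  have hnot_field : ¬IsField (integralClosure R L) := fun h =>
    IsDiscreteValuationRing.not_isField R
      ((Algebra.IsIntegral.isField_iff_isField (FaithfulSMul.algebraMap_injective _ _)).2 h)
  exact ((IsDiscreteValuationRing.TFAE _ hnot_field).out 0 1).2 ‹_›

end SpectralNorm

lemma surjective_pow_residueField {R S : Type*} [CommRing R] [IsLocalRing R]
    [PerfectField (ResidueField R)] [CommRing S] [IsLocalRing S] [Algebra R S]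
    [IsLocalHom (algebraMap R S)] [Module.Finite R S] (p : ℕ) [Fact p.Prime]
    [CharP (ResidueField R) p] : Surjective fun a : ResidueField S => a ^ p := by
  have : PerfectField (ResidueField S) := Algebra.IsAlgebraic.perfectField (ResidueField R)
  have : CharP (ResidueField S) p := charP_of_injective_algebraMap' (ResidueField R) p
  exact surjective_frobenius (ResidueField S) p

section Padic

variable (p : ℕ) [Fact p.Prime] (K : Type*) [Field K] [Algebra ℚ_[p] K] [FiniteDimensional ℚ_[p] K]
  [Algebra ℤ_[p] K] [IsScalarTower ℤ_[p] ℚ_[p] K]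

lemma isDiscreteValuationRing_integralClosure_padicInt :
    IsDiscreteValuationRing (integralClosure ℤ_[p] K) :=
  isDiscreteValuationRing_integralClosure (F := ℚ_[p]) fun _ => Subtype.range_coe.symm ▸ Iff.rfl

lemma surjective_pow_residueField_integralClosure_padicInt [IsLocalRing (integralClosure ℤ_[p] K)] :
    Surjective fun a : ResidueField (integralClosure ℤ_[p] K) => a ^ p := by
  let e : ResidueField ℤ_[p] ≃+* ZMod p := PadicInt.residueField
  have : Finite (ResidueField ℤ_[p]) := .of_equiv _ e.symm.toEquiv
  have : CharP (ResidueField ℤ_[p]) p :=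
    charP_of_injective_ringHom (f := e.symm.toRingHom) e.symm.injective p
  have : Module.Finite ℤ_[p] (integralClosure ℤ_[p] K) :=
    IsIntegralClosure.finite ℤ_[p] ℚ_[p] K _
  have : Module.IsTorsionFree ℤ_[p] K := .trans_faithfulSMul ℤ_[p] ℚ_[p] K
  exact surjective_pow_residueField (R := ℤ_[p]) p

end Padic

section IntegralClosure

variable {R K E : Type*} [CommRing R] [Field K] [Field E] [Algebra R K] [Algebra R E] [Algebra K E]
  [IsScalarTower R K E]

theorem dyadic_trace_norm_subgroup_general [IsDiscreteValuationRing (integralClosure R K)]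
    [IsFractionRing (integralClosure R K) K] [CharZero K] [FiniteDimensional K E]
    (hpow : Surjective fun a : ResidueField (integralClosure R K) => a ^ Module.finrank K E)
    (P : Ideal (integralClosure R E)) [P.IsMaximal]
    (hram : ∀ x : E, x ∈ integralClosure R E →
      ∃ a : K, a ∈ integralClosure R K ∧
        ∃ m : integralClosure R E, m ∈ P ∧ (m : E) = x - algebraMap K E a)
    (B : AddSubgroup K)
    (htr : ∀ x : E, x ∈ integralClosure R E → Algebra.trace K E x ∈ B)
    (hone : (1 : K) ∈ B)
    (hnorm : ∀ x : E, x ∈ integralClosure R E → ∀ b ∈ B, Algebra.norm K x * b ∈ B) :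
    ∀ a : K, a ∈ integralClosure R K → a ∈ B := by
  let A := integralClosure R K
  let S := integralClosure R E
  let : Algebra A S := (IsScalarTower.toAlgHom R K E).mapIntegralClosure.toRingHom.toAlgebra
  have : IsScalarTower A S E := .of_algebraMap_eq fun _ => rfl
  have : IsIntegralClosure S A E := .tower_top (R := R)
  have : Module.Finite A S := IsIntegralClosure.finite A K E S
  have : Module.IsTorsionFree A E := .trans_faithfulSMul A K E
  have : Module.IsTorsionFree A S := IsIntegralClosure.isTorsionFree A E
  have : IsDedekindDomain S := IsIntegralClosure.isDedekindDomain A K E S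
  have : IsLocalization (Algebra.algebraMapSubmonoid S (nonZeroDivisors A)) E :=
    IsIntegralClosure.isLocalization A K E S
  have hres : Surjective (algebraMap A (S ⧸ P)) := by
    intro y
    obtain ⟨x, rfl⟩ := Ideal.Quotient.mk_surjective y
    obtain ⟨a, ha, m, hm, hma⟩ := hram x x.2
    have hx : x - algebraMap A S ⟨a, ha⟩ = m := Subtype.ext hma.symm
    exact ⟨⟨a, ha⟩, (Ideal.Quotient.eq.2 (hx ▸ hm)).symm⟩
  have hrank : Module.finrank A S = Module.finrank K E := IsIntegralClosure.rank A K E S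
  have htrace_eq (x : S) : (Algebra.trace A S x : K) = Algebra.trace K E x :=
    (Algebra.trace_localization A (nonZeroDivisors A) x).symm
  have hnorm_eq (x : S) : (Algebra.norm A x : K) = Algebra.norm K (x : E) :=
    (Algebra.norm_localization A (nonZeroDivisors A) x).symm
  have htop : B.comap (algebraMap A K).toAddMonoidHom = ⊤ :=
    eq_top_of_trace_mem_of_norm_mul_mem P hres (hrank ▸ hpow) _
      (fun x => (htrace_eq x ▸ htr x x.2 : (Algebra.trace A S x : K) ∈ B)) hone
      (fun x b hb => (hnorm_eq x ▸ hnorm x x.2 b hb : (Algebra.norm A x * b : K) ∈ B))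
  exact fun a ha => (AddSubgroup.eq_top_iff' _).1 htop ⟨a, ha⟩

end IntegralClosure

/-- Let `K` be a dyadic non-archimedean local field of characteristic `0` (a finite
extension of `ℚ₂`), `E/K` a ramified quadratic field extension with maximal orders
`𝔬 = integralClosure ℤ₂ K` and `𝒪 = integralClosure ℤ₂ E` (ramified is encoded by the
triviality of the residue field extension), and `B ⊆ 𝔬` an additive subgroup of `K` with
`Tr^E_K(𝒪) ⊆ B`, `1 ∈ B` and `Nr^E_K(𝒪)·B ⊆ B`.  Then `𝔬 ⊆ B`. -/
theorem dyadic_trace_norm_subgroup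
    (K : Type*) [Field K] [Algebra ℚ_[2] K] [FiniteDimensional ℚ_[2] K]
    [Algebra ℤ_[2] K] [IsScalarTower ℤ_[2] ℚ_[2] K]
    (E : Type*) [Field E] [Algebra K E] [FiniteDimensional K E]
    [Algebra ℤ_[2] E] [IsScalarTower ℤ_[2] K E]
    (hquad : Module.finrank K E = 2)
    -- the extension `E/K` is ramified: the residue field extension is trivial
    (𝔪E : Ideal (integralClosure ℤ_[2] E)) (hmax : 𝔪E.IsMaximal)
    (hram : ∀ x : E, x ∈ integralClosure ℤ_[2] E →
      ∃ a : K, a ∈ integralClosure ℤ_[2] K ∧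
        ∃ m : integralClosure ℤ_[2] E, m ∈ 𝔪E ∧ (m : E) = x - algebraMap K E a)
    (B : AddSubgroup K)
    (hBsub : ∀ b ∈ B, b ∈ integralClosure ℤ_[2] K)
    (htr : ∀ x : E, x ∈ integralClosure ℤ_[2] E → Algebra.trace K E x ∈ B)
    (hone : (1 : K) ∈ B)
    (hnorm : ∀ x : E, x ∈ integralClosure ℤ_[2] E → ∀ b ∈ B, Algebra.norm K x * b ∈ B) :
    ∀ a : K, a ∈ integralClosure ℤ_[2] K → a ∈ B := by
  have : CharZero K := charZero_of_injective_algebraMap (algebraMap ℚ_[2] K).injective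
  have := isDiscreteValuationRing_integralClosure_padicInt 2 K
  have := integralClosure.isFractionRing_of_finite_extension (A := ℤ_[2]) ℚ_[2] K
  have hsquare := surjective_pow_residueField_integralClosure_padicInt 2 K
  exact dyadic_trace_norm_subgroup_general (hquad.symm ▸ hsquare) 𝔪E hram B htr hone hnorm
end

section
/- Let E/K be a ramified quadratic extension of non-archimedean local fields of characteristic 0, L a hermitian 𝒪-lattice with even trace form, scale 𝔰(L) = 𝔓^i, and 𝔇_{E/F} = 𝔓^a. Then every φ in the kernel U^♯(L) of U(L) → U(D_L) satisfies φ(x) - x ∈ h(x, L)·𝔓^a·L for all x ∈ L; in particular φ ≡ id mod 𝔓^{i+a}, so det(φ) ≡ 1 mod 𝔓^{i+a}. -/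
/-!
Let `I = h(x, L)` and let `D` be the inverse different, so that `L^∨ = {z | h(z, L) ⊆ D}`. By
sesquilinearity `D·I⁻¹·x ⊆ L^∨`, hence `(D·I⁻¹)·(φ x - x) ⊆ L` for `φ` in the kernel. Multiplying by
the inverse fractional ideal `I·D⁻¹` gives `φ x - x ∈ I·D⁻¹·L`.

For the determinant, split the projective module `L` off a free module `B^n`. By the
Weinstein–Aronszajn identity `det φ` is the determinant of `1 + N`, where `N` is the matrix of
`φ - 1` moved to `B^n`; the entries of `N` lie in `B` and in the ideal `J` with `(φ - 1) L ⊆ J·L`.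
-/

open Module nonZeroDivisors

section Determinant

theorem det_one_add_sub_one_mem {n R : Type*} [Fintype n] [DecidableEq n] [CommRing R]
    {I : Ideal R} {N : Matrix n n R} (hN : ∀ i j, N i j ∈ I) : (1 + N).det - 1 ∈ I := by
  have hN0 : (Ideal.Quotient.mk I).mapMatrix N = 0 :=
    Matrix.ext fun i j ↦ Ideal.Quotient.eq_zero_iff_mem.mpr (hN i j)
  rw [← Ideal.Quotient.eq, RingHom.map_det, map_add, map_one, hN0, add_zero, Matrix.det_one,
    map_one]

theorem det_id_add_comp_comm {R V W : Type*} [CommRing R] [AddCommGroup V] [Module R V]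
    [Free R V] [Module.Finite R V] [AddCommGroup W] [Module R W] [Free R W] [Module.Finite R W]
    (f : V →ₗ[R] W) (g : W →ₗ[R] V) :
    LinearMap.det (LinearMap.id + f ∘ₗ g) = LinearMap.det (LinearMap.id + g ∘ₗ f) := by
  classical
  let v := Free.chooseBasis R V
  let w := Free.chooseBasis R W
  rw [← LinearMap.det_toMatrix v, ← LinearMap.det_toMatrix w, map_add, map_add,
    LinearMap.toMatrix_id, LinearMap.toMatrix_id, LinearMap.toMatrix_comp w v w,
    LinearMap.toMatrix_comp v w v, Matrix.det_one_add_mul_comm]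

end Determinant

section Lattice

variable {B E V : Type*} [CommRing B] [AddCommGroup V] [Module B V]

theorem isLocalizedModule_subtype_of_isLattice [CommRing E] [Algebra B E] [Module E V]
    [IsScalarTower B E V] (S : Submonoid B) [IsLocalization S E] (L : Submodule B V)
    [L.IsLattice E] : IsLocalizedModule S L.subtype where
  map_units s := by
    have hs : algebraMap B (End B V) s =
        (algebraMap E (End E V) (algebraMap B E s)).restrictScalars B :=
      LinearMap.ext fun v ↦ (algebraMap_smul E (s : B) v).symm
    have hunit := (IsLocalization.map_units E s).map (algebraMap E (End E V))
    rw [End.isUnit_iff] at hunit ⊢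
    rwa [hs]
  surj v := by
    obtain ⟨s, hs⟩ := multiple_mem_span_of_mem_localization_span S E (L : Set V) v
      (Submodule.IsLattice.span_eq_top (M := L) ▸ Submodule.mem_top)
    rw [Submodule.span_eq] at hs
    exact ⟨(⟨_, hs⟩, s), rfl⟩
  exists_of_eq h := ⟨1, by rw [Subtype.ext h]⟩

theorem isLattice_of_forall_mem_closure {A : Type*} [CommRing A] [CommRing E] [Algebra A E]
    [Module E V] {O : Subalgebra A E} {L : Submodule O V} (hspan : Submodule.span E (L : Set V) = ⊤)
    {s : Finset V} (hsL : (s : Set V) ⊆ L)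
    (hs : ∀ v ∈ L, v ∈ AddSubgroup.closure {w : V | ∃ c ∈ O, ∃ y ∈ s, w = c • y}) :
    L.IsLattice E := by
  refine ⟨⟨s, le_antisymm (Submodule.span_le.mpr hsL) fun v hv ↦ ?_⟩, hspan⟩
  refine (AddSubgroup.closure_le (Submodule.span O (s : Set V)).toAddSubgroup).mpr ?_ (hs v hv)
  rintro _ ⟨c, hc, y, hy, rfl⟩
  exact Submodule.smul_mem _ (⟨c, hc⟩ : O) (Submodule.subset_span hy)

theorem exists_dual_generators_of_isLattice [CommRing E] [Algebra B E] [Module E V]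
    [IsScalarTower B E V] [IsFractionRing B E] (L : Submodule B V) [L.IsLattice E]
    [Projective B L] :
    ∃ (n : ℕ) (y : Fin n → V) (g : V →ₗ[E] Fin n → E), (∀ j, y j ∈ L) ∧
      (∀ x ∈ L, ∀ i, g x i ∈ (algebraMap B E).range) ∧
      Fintype.linearCombination E y ∘ₗ g = LinearMap.id := by
  have := isLocalizedModule_subtype_of_isLattice (E := E) B⁰ L
  obtain ⟨n, f, g, -, -, hfg⟩ := Finite.exists_comp_eq_id_of_projective B L
  let coeE : (Fin n → B) →ₗ[B] Fin n → E :=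
    LinearMap.pi fun i ↦ Algebra.linearMap B E ∘ₗ LinearMap.proj i
  let gE := IsLocalizedModule.mapExtendScalars B⁰ L.subtype coeE E g
  have hgE (x : L) : gE x = coeE (g x) := IsLocalizedModule.map_apply B⁰ L.subtype coeE g x
  refine ⟨n, fun j ↦ f (Pi.basisFun B (Fin n) j), gE, fun j ↦ (f _).2, fun x hx i ↦
    ⟨g ⟨x, hx⟩ i, (congr_fun (hgE ⟨x, hx⟩) i).symm⟩, ?_⟩
  refine LinearMap.ext_on (Submodule.IsLattice.span_eq_top (M := L)) fun x hx ↦ ?_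
  have hfgx : f (g ⟨x, hx⟩) = ⟨x, hx⟩ := LinearMap.congr_fun hfg ⟨x, hx⟩
  rw [← (Pi.basisFun B (Fin n)).sum_repr (g _), map_sum] at hfgx
  simpa [Fintype.linearCombination_apply, hgE ⟨x, hx⟩, coeE] using congr_arg Subtype.val hfgx

variable [Field E] [Algebra B E] [Module E V] [IsScalarTower B E V]

variable (E) in
theorem projective_of_isLattice [IsFractionRing B E] [IsDedekindDomain B] (L : Submodule B V)
    [L.IsLattice E] : Projective B L := by
  have : IsTorsionFree B V := .trans_faithfulSMul B E V
  have := Submodule.IsLattice.finite E L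
  have := finitePresentation_of_finite B L
  exact Flat.projective_of_finitePresentation

theorem det_sub_one_mem_of_forall_sub_mem_smul [IsFractionRing B E] {L : Submodule B V}
    [L.IsLattice E] [Projective B L] {J : Submodule B E} {φ : V →ₗ[E] V}
    (hφL : ∀ x ∈ L, φ x ∈ L) (hφJ : ∀ x ∈ L, φ x - x ∈ J • L) : LinearMap.det φ - 1 ∈ J := by
  obtain ⟨n, y, g, hyL, hgL, hyg⟩ := exists_dual_generators_of_isLattice (E := E) L
  have hgJ : ∀ v ∈ J • L, ∀ i, g v i ∈ J := by
    intro v hv i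
    refine Submodule.smul_induction_on hv (fun a ha x hx ↦ ?_) fun u v hu hv ↦ ?_
    · obtain ⟨b, hb⟩ := hgL x hx i
      rw [map_smul, Pi.smul_apply, ← hb, smul_eq_mul, mul_comm, ← Algebra.smul_def]
      exact J.smul_mem b ha
    · rw [map_add, Pi.add_apply]
      exact J.add_mem hu hv
  choose N hN using fun i j ↦ hgL _ (L.sub_mem (hφL _ (hyL j)) (hyL j)) i
  have hNJ : (1 + Matrix.of N).det - 1 ∈ J.comap (Algebra.linearMap B E) :=
    det_one_add_sub_one_mem fun i j ↦ by simpa [hN] using hgJ _ (hφJ _ (hyL j)) i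
  let ψ := (φ - LinearMap.id) ∘ₗ Fintype.linearCombination E y
  have hφψ : φ = LinearMap.id + ψ ∘ₗ g := by
    rw [LinearMap.comp_assoc, hyg, LinearMap.comp_id, add_sub_cancel]
  have hgψ : LinearMap.id + g ∘ₗ ψ =
      Matrix.toLin' ((algebraMap B E).mapMatrix (1 + Matrix.of N)) := by
    rw [map_add, map_one, map_add, Matrix.toLin'_one, add_right_inj]
    refine LinearMap.pi_ext' fun j ↦ LinearMap.ext_ring (funext fun i ↦ ?_)
    simp [ψ, hN]
  have : Module.Finite E V := .of_surjective _ (LinearMap.surjective_of_comp_eq_id g _ hyg)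
  have hdet : LinearMap.det φ = algebraMap B E (1 + Matrix.of N).det := by
    rw [hφψ, det_id_add_comp_comm, hgψ, LinearMap.det_toLin', RingHom.map_det]
  simpa [hdet] using hNJ

end Lattice

section FractionalIdeal

variable {B E V : Type*} [CommRing B] [AddCommGroup V] [Module B V] {L : Submodule B V}

theorem mem_closure_of_mem_span_mul_smul [CommRing E] [Algebra B E] [Module E V]
    [IsScalarTower B E V] {S : Set E} {D : Submodule B E} {v : V}
    (hv : v ∈ (Submodule.span B S * D) • L) :
    v ∈ AddSubgroup.closure {w : V | ∃ s ∈ S, ∃ d ∈ D, ∃ z ∈ L, w = (s * d) • z} := by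
  refine Submodule.smul_induction_on hv (fun e he z hz ↦ ?_) fun v w hv hw ↦ add_mem hv hw
  refine Submodule.mul_induction_on he (fun a ha d hd ↦ ?_) fun e e' he he' ↦ ?_
  · induction ha using Submodule.span_induction generalizing z with
    | mem s hs => exact AddSubgroup.subset_closure ⟨s, hs, d, hd, z, hz, rfl⟩
    | zero => simp
    | add a b _ _ ha hb => rw [add_mul, add_smul]; exact add_mem (ha z hz) (hb z hz)
    | smul c a _ ha =>
      rw [smul_mul_assoc, smul_assoc, ← smul_comm]
      exact ha (c • z) (L.smul_mem c hz)
  · rw [add_smul]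
    exact add_mem he he'

theorem mem_inv_smul_of_forall_smul_mem [Field E] [Algebra B E] [Module E V] [IsScalarTower B E V]
    [IsFractionRing B E] [IsDedekindDomain B] {J : FractionalIdeal B⁰ E} (hJ : J ≠ 0) {v : V}
    (hv : ∀ b ∈ J, b • v ∈ L) : v ∈ (↑J⁻¹ : Submodule B E) • L := by
  have hone : (1 : E) ∈ J⁻¹ * J := inv_mul_cancel₀ hJ ▸ FractionalIdeal.one_mem_one B⁰
  suffices ∀ r ∈ J⁻¹ * J, r • v ∈ (↑J⁻¹ : Submodule B E) • L from one_smul E v ▸ this 1 hone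
  intro r hr
  refine FractionalIdeal.mul_induction_on hr (fun a ha b hb ↦ ?_) fun r s hr hs ↦ ?_
  · rw [mul_smul]
    exact Submodule.smul_mem_smul ha (hv b hb)
  · rw [add_smul]
    exact add_mem hr hs

end FractionalIdeal

section Sesquilinear

variable {B E V : Type*} [CommRing B] [CommRing E] [Algebra B E] [AddCommGroup V] [Module B V]
  [Module E V] {σ : E →+* E}

/-- The sesquilinear map underlying a `σ`-hermitian form given as a function of two variables. -/
def sesquilinearOfHermitian (σ : E →+* E) (h : V → V → E)
    (hadd : ∀ x y z, h (x + y) z = h x z + h y z) (hsmul : ∀ (e : E) x y, h (e • x) y = e * h x y)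
    (hconj : ∀ x y, h x y = σ (h y x)) : V →ₗ[E] V →ₛₗ[σ] E :=
  LinearMap.mk₂'ₛₗ (RingHom.id E) σ h hadd hsmul
    (fun x y z ↦ by rw [hconj, hadd, map_add, ← hconj, ← hconj])
    (fun e x y ↦ by rw [hconj, hsmul, map_mul, ← hconj, smul_eq_mul])

variable (h : V →ₗ[E] V →ₛₗ[σ] E) (L : Submodule B V)

/-- The ideal `h(x, L)`, as a `B`-submodule of `E`. -/
def valueIdeal (x : V) : Submodule B E :=
  Submodule.span B (h x '' L)

/-- The scale `𝔰(L) = h(L, L)`, as a `B`-submodule of `E`. -/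
def scale : Submodule B E :=
  Submodule.span B (Set.image2 (fun x y ↦ h x y) L L)

variable {h L}

theorem apply_mem_valueIdeal (x : V) {y : V} (hy : y ∈ L) : h x y ∈ valueIdeal h L x :=
  Submodule.subset_span ⟨y, hy, rfl⟩

theorem valueIdeal_le_scale {x : V} (hx : x ∈ L) : valueIdeal h L x ≤ scale h L :=
  Submodule.span_mono <| Set.image_subset_iff.mpr fun _ hy ↦ Set.mem_image2_of_mem hx hy

variable [IsScalarTower B E V]

variable (h L) in
/-- The dual `{z | h(z, L) ⊆ D}` of a lattice relative to an ideal `D`: this is `L^♯` for `D = 1`,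
and `L^∨` when `D` is the inverse different. -/
def dualLattice (D : Submodule B E) : Submodule B V where
  carrier := {z | ∀ y ∈ L, h z y ∈ D}
  add_mem' hz hw y hy := by
    rw [map_add, LinearMap.add_apply]
    exact D.add_mem (hz y hy) (hw y hy)
  zero_mem' y _ := by
    rw [map_zero, LinearMap.zero_apply]
    exact D.zero_mem
  smul_mem' c z hz y hy := by
    rw [LinearMap.map_smul_of_tower, LinearMap.smul_apply]
    exact D.smul_mem c (hz y hy)

theorem fg_valueIdeal (hσ : ∀ c : B, σ (algebraMap B E c) ∈ (algebraMap B E).range) (hL : L.FG)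
    (x : V) : (valueIdeal h L x).FG := by
  obtain ⟨s, rfl⟩ := hL
  suffices valueIdeal h (Submodule.span B (s : Set V)) x = Submodule.span B (h x '' s) from
    this ▸ Submodule.fg_span (s.finite_toSet.image _)
  refine le_antisymm (Submodule.span_le.mpr ?_)
    (Submodule.span_mono (Set.image_mono Submodule.subset_span))
  rintro _ ⟨y, hy, rfl⟩
  induction hy using Submodule.span_induction with
  | mem y hy => exact Submodule.subset_span ⟨y, hy, rfl⟩
  | zero => simp
  | add y z _ _ hy hz => rw [map_add]; exact add_mem hy hz
  | smul c y _ hy =>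
    obtain ⟨c', hc'⟩ := hσ c
    rw [← algebraMap_smul E c y, map_smulₛₗ, ← hc', algebraMap_smul]
    exact Submodule.smul_mem _ c' hy

theorem eq_zero_of_valueIdeal_eq_bot [L.IsLattice E] (hh : h.SeparatingLeft) {x : V}
    (hx : valueIdeal h L x = ⊥) : x = 0 := by
  have hzero : h x = 0 := LinearMap.ext_on (Submodule.IsLattice.span_eq_top (M := L)) fun y hy ↦
    (Submodule.mem_bot B).mp (hx ▸ apply_mem_valueIdeal x hy)
  exact hh x fun y ↦ LinearMap.congr_fun hzero y

end Sesquilinear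

section DiscriminantKernel

variable {B E V : Type*} [CommRing B] [IsDedekindDomain B] [Field E] [Algebra B E]
  [IsFractionRing B E] [AddCommGroup V] [Module B V] [Module E V] [IsScalarTower B E V]
  {σ : E →+* E} {h : V →ₗ[E] V →ₛₗ[σ] E} {L : Submodule B V}

theorem smul_mem_dualLattice {I D : FractionalIdeal B⁰ E} {x : V} (hI : I ≠ 0)
    (hIx : valueIdeal h L x ≤ I) {b : E} (hb : b ∈ D * I⁻¹) : b • x ∈ dualLattice h L D := by
  intro y hy
  have hbxy := FractionalIdeal.mul_mem_mul hb (hIx (apply_mem_valueIdeal x hy))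
  rwa [mul_assoc, inv_mul_cancel₀ hI, mul_one, ← smul_eq_mul, ← LinearMap.smul_apply,
    ← map_smul] at hbxy

variable [L.IsLattice E]

theorem apply_sub_self_mem_valueIdeal_mul_inv_smul
    (hσ : ∀ c : B, σ (algebraMap B E c) ∈ (algebraMap B E).range) (hh : h.SeparatingLeft)
    {D : FractionalIdeal B⁰ E} (hD : D ≠ 0) {φ : V →ₗ[E] V}
    (hφ : ∀ z ∈ dualLattice h L D, φ z - z ∈ L) (x : V) :
    φ x - x ∈ (valueIdeal h L x * ↑D⁻¹) • L := by
  let I : FractionalIdeal B⁰ E :=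
    ⟨valueIdeal h L x,
      FractionalIdeal.isFractional_of_fg (fg_valueIdeal hσ Submodule.IsLattice.fg x)⟩
  obtain rfl | hx := eq_or_ne x 0
  · simp
  have hI : I ≠ 0 := fun hI0 ↦
    hx (eq_zero_of_valueIdeal_eq_bot hh (FractionalIdeal.coeToSubmodule_eq_bot.mpr hI0))
  have hmem : φ x - x ∈ (↑(D * I⁻¹)⁻¹ : Submodule B E) • L := by
    refine mem_inv_smul_of_forall_smul_mem (mul_ne_zero hD (inv_ne_zero hI)) fun b hb ↦ ?_
    rw [smul_sub, ← map_smul]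
    exact hφ _ (smul_mem_dualLattice hI le_rfl hb)
  rwa [mul_inv, inv_inv, mul_comm, FractionalIdeal.coe_mul] at hmem

theorem apply_sub_self_mem_scale_mul_inv_smul
    (hσ : ∀ c : B, σ (algebraMap B E c) ∈ (algebraMap B E).range) (hh : h.SeparatingLeft)
    {D : FractionalIdeal B⁰ E} (hD : D ≠ 0) {φ : V →ₗ[E] V}
    (hφ : ∀ z ∈ dualLattice h L D, φ z - z ∈ L) {x : V} (hx : x ∈ L) :
    φ x - x ∈ (scale h L * ↑D⁻¹) • L :=
  Submodule.smul_mono_left (mul_le_mul_left (valueIdeal_le_scale hx) _)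
    (apply_sub_self_mem_valueIdeal_mul_inv_smul hσ hh hD hφ x)

theorem det_sub_one_mem_scale_mul_inv
    (hσ : ∀ c : B, σ (algebraMap B E c) ∈ (algebraMap B E).range) (hh : h.SeparatingLeft)
    {D : FractionalIdeal B⁰ E} (hD : D ≠ 0) {φ : V →ₗ[E] V} (hφL : ∀ x ∈ L, φ x ∈ L)
    (hφ : ∀ z ∈ dualLattice h L D, φ z - z ∈ L) :
    LinearMap.det φ - 1 ∈ scale h L * ↑D⁻¹ := by
  have := projective_of_isLattice E L
  exact det_sub_one_mem_of_forall_sub_mem_smul hφL fun x hx ↦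
    apply_sub_self_mem_scale_mul_inv_smul hσ hh hD hφ hx

end DiscriminantKernel

section Different

variable {A F E V : Type*} [CommRing A] [Field F] [Algebra A F] [IsFractionRing A F] [Field E]
  [Algebra F E] [Algebra A E] [IsScalarTower A F E] [FiniteDimensional F E]
  [Algebra.IsSeparable F E]

section

variable [IsDomain A] [IsIntegrallyClosed A] [IsDedekindDomain (integralClosure A E)]
  [IsFractionRing (integralClosure A E) E]

theorem mem_dual_one_iff_trace {e : E} :
    e ∈ FractionalIdeal.dual A F (1 : FractionalIdeal (integralClosure A E)⁰ E) ↔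
      ∀ c ∈ integralClosure A E, ∃ k : A, Algebra.trace F E (e * c) = algebraMap A F k := by
  simp [FractionalIdeal.mem_dual (one_ne_zero' (FractionalIdeal (integralClosure A E)⁰ E)),
    FractionalIdeal.mem_one_iff, Algebra.traceForm_apply, eq_comm]

theorem mem_inv_dual_one_iff_trace {d : E} :
    d ∈ (FractionalIdeal.dual A F (1 : FractionalIdeal (integralClosure A E)⁰ E))⁻¹ ↔
      ∀ e : E, (∀ c ∈ integralClosure A E,
        ∃ k : A, Algebra.trace F E (e * c) = algebraMap A F k) → d * e ∈ integralClosure A E := by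
  rw [FractionalIdeal.mem_inv_iff (FractionalIdeal.dual_ne_zero A F
    (one_ne_zero' (FractionalIdeal (integralClosure A E)⁰ E)))]
  simp [mem_dual_one_iff_trace, FractionalIdeal.mem_one_iff]

end

variable (F) in
theorem kernel_congruence_general [IsDedekindDomain A] [AddCommGroup V] [Module E V]
    (σ : E →ₐ[A] E) (h : V →ₗ[E] V →ₛₗ[(σ : E →+* E)] E) (hh : h.SeparatingLeft)
    (L : Submodule (integralClosure A E) V) [L.IsLattice E]
    (φ : V →ₗ[E] V) (hφL : ∀ v ∈ L, φ v ∈ L)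
    (hφker : ∀ z : V, (∀ y ∈ L, ∃ c : A, Algebra.trace F E (h z y) = algebraMap A F c) →
      φ z - z ∈ L) :
    (∀ x ∈ L, φ x - x ∈ AddSubgroup.closure {w : V |
        ∃ y ∈ L, ∃ d : E, (∀ e : E, (∀ c ∈ integralClosure A E,
            ∃ k : A, Algebra.trace F E (e * c) = algebraMap A F k) →
          d * e ∈ integralClosure A E) ∧
        ∃ z ∈ L, w = (h x y * d) • z}) ∧
      (∀ x ∈ L, φ x - x ∈ AddSubgroup.closure {w : V |
        ∃ y ∈ L, ∃ y' ∈ L, ∃ d : E, (∀ e : E, (∀ c ∈ integralClosure A E,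
            ∃ k : A, Algebra.trace F E (e * c) = algebraMap A F k) →
          d * e ∈ integralClosure A E) ∧
        ∃ z ∈ L, w = (h y y' * d) • z}) ∧
      LinearMap.det φ - 1 ∈ AddSubgroup.closure {e : E |
        ∃ y ∈ L, ∃ y' ∈ L, ∃ d : E, (∀ e' : E, (∀ c ∈ integralClosure A E,
            ∃ k : A, Algebra.trace F E (e' * c) = algebraMap A F k) →
          d * e' ∈ integralClosure A E) ∧
        ∃ c ∈ integralClosure A E, e = h y y' * d * c} := by
  have := integralClosure.isFractionRing_of_finite_extension (A := A) F E
  have := integralClosure.isDedekindDomain A F E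
  let D := FractionalIdeal.dual A F (1 : FractionalIdeal (integralClosure A E)⁰ E)
  have hD : D ≠ 0 := FractionalIdeal.dual_ne_zero A F one_ne_zero
  have hσ (c : integralClosure A E) : σ c ∈ (algebraMap (integralClosure A E) E).range :=
    ⟨⟨σ c, c.2.map σ⟩, rfl⟩
  have hφ (z) (hz : z ∈ dualLattice h L D) : φ z - z ∈ L := hφker z fun y hy ↦ by
    simpa using mem_dual_one_iff_trace.mp (hz y hy) 1 (one_mem _)
  refine ⟨fun x _ ↦ ?_, fun x hx ↦ ?_, ?_⟩
  · refine AddSubgroup.closure_mono ?_ (mem_closure_of_mem_span_mul_smul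
      (apply_sub_self_mem_valueIdeal_mul_inv_smul hσ hh hD hφ x))
    rintro _ ⟨_, ⟨y, hy, rfl⟩, d, hd, z, hz, rfl⟩
    exact ⟨y, hy, d, mem_inv_dual_one_iff_trace.mp hd, z, hz, rfl⟩
  · refine AddSubgroup.closure_mono ?_ (mem_closure_of_mem_span_mul_smul
      (apply_sub_self_mem_scale_mul_inv_smul hσ hh hD hφ hx))
    rintro _ ⟨_, ⟨y, hy, y', hy', rfl⟩, d, hd, z, hz, rfl⟩
    exact ⟨y, hy, y', hy', d, mem_inv_dual_one_iff_trace.mp hd, z, hz, rfl⟩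
  · have hdet := det_sub_one_mem_scale_mul_inv hσ hh hD hφL hφ
    rw [← mul_one (_ * _), ← smul_eq_mul] at hdet
    refine AddSubgroup.closure_mono ?_ (mem_closure_of_mem_span_mul_smul hdet)
    rintro _ ⟨_, ⟨y, hy, y', hy', rfl⟩, d, hd, _, hc, rfl⟩
    obtain ⟨c, rfl⟩ := Submodule.mem_one.mp hc
    exact ⟨y, hy, y', hy', d, mem_inv_dual_one_iff_trace.mp hd, c, c.2, rfl⟩

end Different

/-- Let `E/K` be a ramified quadratic extension of non-archimedean local fields of
characteristic `0` (finite over `ℚ_p`), and `(L, h)` a hermitian `𝒪`-lattice with even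
trace form, scale `𝔰(L) = 𝔓^i` and different `𝔇_{E/F} = 𝔓^a`.  Every `φ` in the kernel
`U^♯(L)` of `U(L) → U(D_L)` satisfies `φ(x) - x ∈ h(x,L)·𝔓^a·L` for all `x ∈ L`; in
particular `φ ≡ id mod 𝔓^{i+a}`, so `det(φ) ≡ 1 mod 𝔓^{i+a} = 𝔰(L)·𝔇_{E/F}`. -/
theorem kernel_congruence
    (p : ℕ) [Fact p.Prime]
    (K : Type*) [Field K] [Algebra ℚ_[p] K] [FiniteDimensional ℚ_[p] K]
    [Algebra ℤ_[p] K] [IsScalarTower ℤ_[p] ℚ_[p] K]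
    (E : Type*) [Field E] [Algebra K E] [Algebra ℚ_[p] E] [IsScalarTower ℚ_[p] K E]
    [Algebra ℤ_[p] E] [IsScalarTower ℤ_[p] K E] [Module.Finite K E]
    [Module.Finite ℚ_[p] E]
    (hquad : Module.finrank K E = 2)
    (ι : E ≃ₐ[K] E) (hinv : ∀ z, ι (ι z) = z)
    (hfix : ∀ z : E, ι z = z → ∃ a : K, algebraMap K E a = z)
    -- `E/K` is ramified: the residue field extension is trivial
    (𝔪E : Ideal (integralClosure ℤ_[p] E)) (hmax : 𝔪E.IsMaximal)
    (hram : ∀ z : E, z ∈ integralClosure ℤ_[p] E →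
      ∃ a : K, a ∈ integralClosure ℤ_[p] K ∧
        ∃ m : integralClosure ℤ_[p] E, m ∈ 𝔪E ∧ (m : E) = z - algebraMap K E a)
    (V : Type*) [AddCommGroup V] [Module E V] [Module.Free E V] [Module.Finite E V]
    (h : V → V → E)
    (hadd : ∀ x y z : V, h (x + y) z = h x z + h y z)
    (hsmul : ∀ (e : E) (x y : V), h (e • x) y = e * h x y)
    (hconj : ∀ x y : V, h x y = ι (h y x))
    (hnd : ∀ x : V, (∀ y, h x y = 0) → x = 0)
    (L : AddSubgroup V)
    (hOL : ∀ c ∈ integralClosure ℤ_[p] E, ∀ x ∈ L, c • x ∈ L)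
    (hfull : Submodule.span E (L : Set V) = ⊤)
    (hfg : ∃ s : Finset V, ↑s ⊆ (L : Set V) ∧ ∀ v ∈ L,
      v ∈ AddSubgroup.closure {w : V | ∃ c ∈ integralClosure ℤ_[p] E, ∃ y ∈ s, w = c • y})
    -- the trace form on `L` is even, i.e. `𝔫(L) ⊆ 𝔇_{K/F}^{-1}`
    (heven : ∀ v ∈ L, ∃ a : K, algebraMap K E a = h v v ∧
      ∀ u ∈ integralClosure ℤ_[p] K,
        ∃ k : ℤ_[p], Algebra.trace ℚ_[p] K (a * u) = algebraMap ℤ_[p] ℚ_[p] k)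
    (φ : V →ₗ[E] V)
    (hφh : ∀ x y, h (φ x) (φ y) = h x y)
    (hφL : ∀ v : V, v ∈ L ↔ φ v ∈ L)
    -- `φ ∈ U^♯(L)`, i.e. `(φ - id)(L^∨) ⊆ L`
    (hφker : ∀ z : V, (∀ y ∈ L, ∃ c : ℤ_[p],
        Algebra.trace ℚ_[p] E (h z y) = algebraMap ℤ_[p] ℚ_[p] c) →
      φ z - z ∈ L) :
    (∀ x ∈ L, φ x - x ∈ AddSubgroup.closure {w : V |
        ∃ y ∈ L, ∃ d : E, (∀ e : E, (∀ c ∈ integralClosure ℤ_[p] E,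
            ∃ k : ℤ_[p], Algebra.trace ℚ_[p] E (e * c) = algebraMap ℤ_[p] ℚ_[p] k) →
          d * e ∈ integralClosure ℤ_[p] E) ∧
        ∃ z ∈ L, w = (h x y * d) • z}) ∧
      (∀ x ∈ L, φ x - x ∈ AddSubgroup.closure {w : V |
        ∃ y ∈ L, ∃ y' ∈ L, ∃ d : E, (∀ e : E, (∀ c ∈ integralClosure ℤ_[p] E,
            ∃ k : ℤ_[p], Algebra.trace ℚ_[p] E (e * c) = algebraMap ℤ_[p] ℚ_[p] k) →
          d * e ∈ integralClosure ℤ_[p] E) ∧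
        ∃ z ∈ L, w = (h y y' * d) • z}) ∧
      LinearMap.det φ - 1 ∈ AddSubgroup.closure {e : E |
        ∃ y ∈ L, ∃ y' ∈ L, ∃ d : E, (∀ e' : E, (∀ c ∈ integralClosure ℤ_[p] E,
            ∃ k : ℤ_[p], Algebra.trace ℚ_[p] E (e' * c) = algebraMap ℤ_[p] ℚ_[p] k) →
          d * e' ∈ integralClosure ℤ_[p] E) ∧
        ∃ c ∈ integralClosure ℤ_[p] E, e = h y y' * d * c} := by
  have := IsScalarTower.to₁₂₄ ℤ_[p] ℚ_[p] K E
  let M : Submodule (integralClosure ℤ_[p] E) V := { L with smul_mem' c x := hOL c c.2 x }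
  obtain ⟨s, hsL, hs⟩ := hfg
  have : M.IsLattice E := isLattice_of_forall_mem_closure hfull hsL hs
  exact kernel_congruence_general ℚ_[p] (ι.toAlgHom.restrictScalars ℤ_[p])
    (sesquilinearOfHermitian _ h hadd hsmul hconj) hnd M φ (fun v ↦ (hφL v).mp) hφker
end
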